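/- arXiv:1103.2913 — 2 statements merged into one kernel-verified Lean document; each statement's English description precedes it below -/
import Mathlib

section
/- A simple graph G is 1-chord free if and only if for every pair of distinct vertices a, b, every minimal (a,b) vertex separator of G is an independent (stable) set. -/
/-!
Suppose a minimal `(a,b)` separator `S` contains an edge `uv`, and let `A`, `B` be the components of
`a`, `b` in `G \ S`. By minimality `u` and `v` both have neighbours in `A` and in `B`
(`IsMinABSeparator.exists_adj`), so there are shortest paths of length at least two from `u` to `v`
with interior in `A`, respectively in `B` (`exists_arc`). A shortest path has no chord other than
`uv`, and there are no edges between `A` and `B`, so the two paths together form a cycle whose only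
chord is `uv`.

Conversely, let a cycle have the single chord `uv`. Removing `u`, `v` leaves two open arcs with no
edges between them, so the complement of the union of these arcs separates the neighbour `a` of `u`
on the first arc from the neighbour `b` of `u` on the second. A minimal separator contained in that
complement has to contain both `u` and `v`, as otherwise `a` and `b` are joined along the cycle
through the missing one; hence it is not independent.

To avoid arithmetic in `ZMod n`, the cycle is handled through the numbering `0, …, n - 1` of its
vertices that starts at one end of the chord (`NumberedOneChord`).
-/

/-- Reachability in `G` by a walk all of whose vertices avoid the set `S`
(i.e. reachability in the induced subgraph `G \ S`). -/
def ReachAvoid {V : Type*} (G : SimpleGraph V) (S : Set V) (x y : V) : Prop :=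
  ∃ w : G.Walk x y, ∀ z ∈ w.support, z ∉ S

/-- `S` is an `(a,b)` vertex separator: `a, b ∉ S` and `a`, `b` lie in distinct
connected components of `G \ S`. -/
def IsABSeparator {V : Type*} (G : SimpleGraph V) (a b : V) (S : Set V) : Prop :=
  a ∉ S ∧ b ∉ S ∧ ¬ ReachAvoid G S a b

/-- `S` is a minimal `(a,b)` vertex separator: it is one, and no proper subset is. -/
def IsMinABSeparator {V : Type*} (G : SimpleGraph V) (a b : V) (S : Set V) : Prop :=
  IsABSeparator G a b S ∧ ∀ S' ⊂ S, ¬ IsABSeparator G a b S'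

/-- `S` is a stable (independent) set of vertices of `G`. -/
def IsStableSet {V : Type*} (G : SimpleGraph V) (S : Set V) : Prop :=
  ∀ u ∈ S, ∀ v ∈ S, ¬ G.Adj u v

/-- `W` induces a 1-chord subgraph of `G`: a cycle of length `n ≥ 4`
(vertices `f 0, f 1, …` in cyclic order) together with exactly one chord
`{f i, f j}`, and no other edges among the vertices of `W` (induced). -/
def IsOneChordSet {V : Type*} (G : SimpleGraph V) (W : Set V) : Prop :=
  ∃ n : ℕ, 4 ≤ n ∧ ∃ f : ZMod n → V, Function.Injective f ∧ Set.range f = W ∧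
    ∃ i j : ZMod n, j ≠ i ∧ j ≠ i + 1 ∧ i ≠ j + 1 ∧
      ∀ x y : ZMod n, G.Adj (f x) (f y) ↔
        ((y = x + 1 ∨ x = y + 1) ∨ (x = i ∧ y = j) ∨ (x = j ∧ y = i))

/-- `G` is 1-chord free: no induced cycle of length at least 4 with exactly one chord. -/
def OneChordFree {V : Type*} (G : SimpleGraph V) : Prop :=
  ∀ W : Set V, ¬ IsOneChordSet G W

section

variable {V : Type*} {G : SimpleGraph V}

/-! ### Reachability avoiding a set -/

lemma ReachAvoid.refl {S : Set V} {a : V} (h : a ∉ S) : ReachAvoid G S a a :=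
  ⟨.nil, by simpa using h⟩

lemma ReachAvoid.symm {S : Set V} {a b : V} (h : ReachAvoid G S a b) : ReachAvoid G S b a := by
  obtain ⟨w, hw⟩ := h
  exact ⟨w.reverse, by simpa using hw⟩

lemma ReachAvoid.trans {S : Set V} {a b c : V} (h : ReachAvoid G S a b)
    (h' : ReachAvoid G S b c) : ReachAvoid G S a c := by
  obtain ⟨w, hw⟩ := h
  obtain ⟨w', hw'⟩ := h'
  refine ⟨w.append w', fun z hz => ?_⟩
  rcases (SimpleGraph.Walk.mem_support_append_iff _ _).1 hz with hz | hz
  exacts [hw z hz, hw' z hz]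

lemma ReachAvoid.right_notMem {S : Set V} {a b : V} (h : ReachAvoid G S a b) : b ∉ S := by
  obtain ⟨w, hw⟩ := h
  exact hw b w.end_mem_support

lemma ReachAvoid.of_adj {S : Set V} {a b : V} (ha : a ∉ S) (hb : b ∉ S) (h : G.Adj a b) :
    ReachAvoid G S a b :=
  ⟨h.toWalk, by simp [ha, hb]⟩

lemma ReachAvoid.step {S : Set V} {a b c : V} (h : ReachAvoid G S a b) (hbc : G.Adj b c)
    (hc : c ∉ S) : ReachAvoid G S a c :=
  h.trans (.of_adj h.right_notMem hc hbc)

/-- A set closed under steps of `G` that avoid `S` is closed under reachability in `G \ S`. -/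
lemma ReachAvoid.mem_of_closed {S C : Set V} {a b : V} (h : ReachAvoid G S a b) (ha : a ∈ C)
    (hC : ∀ x ∈ C, ∀ y, y ∉ S → G.Adj x y → y ∈ C) : b ∈ C := by
  obtain ⟨w, hw⟩ := h
  induction w with
  | nil => exact ha
  | cons hadj p ih =>
    simp only [SimpleGraph.Walk.support_cons, List.mem_cons, forall_eq_or_imp] at hw
    exact ih (hC _ ha _ (hw.2 _ p.start_mem_support) hadj) hw.2

/-! ### Minimal separators -/

lemma IsABSeparator.symm {a b : V} {S : Set V} (h : IsABSeparator G a b S) :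
    IsABSeparator G b a S :=
  ⟨h.2.1, h.1, fun hr => h.2.2 hr.symm⟩

lemma IsMinABSeparator.symm {a b : V} {S : Set V} (h : IsMinABSeparator G a b S) :
    IsMinABSeparator G b a S :=
  ⟨h.1.symm, fun S' hS' hs => h.2 S' hS' hs.symm⟩

/-- Each vertex of a minimal separator has a neighbour in the component of `a`: otherwise that
component would not grow when the vertex is dropped from the separator. -/
lemma IsMinABSeparator.exists_adj {a b u : V} {S : Set V} (h : IsMinABSeparator G a b S)
    (hu : u ∈ S) : ∃ x, ReachAvoid G S a x ∧ G.Adj u x := by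
  by_contra! hcon
  have hss : S \ {u} ⊂ S := Set.sdiff_singleton_ssubset.2 hu
  refine h.2 _ hss ⟨fun ha => h.1.1 ha.1, fun hb => h.1.2.1 hb.1, fun hr => h.1.2.2 ?_⟩
  refine hr.mem_of_closed (C := {x | ReachAvoid G S a x}) (ReachAvoid.refl h.1.1) ?_
  intro x hx y hy hxy
  by_cases hyu : y = u
  · subst hyu
    exact absurd hxy.symm (hcon x hx)
  · exact ReachAvoid.step hx hxy fun hyS => hy ⟨hyS, hyu⟩

lemma exists_minABSeparator_subset [Finite V] {a b : V} {T : Set V}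
    (hT : IsABSeparator G a b T) : ∃ S ⊆ T, IsMinABSeparator G a b S := by
  obtain ⟨S, hST, hS⟩ := exists_minimal_le_of_wellFoundedLT (IsABSeparator G a b) T hT
  exact ⟨S, hST, hS.prop, fun S' hS' hs => hS'.not_subset (hS.le_of_le hs hS'.subset)⟩

/-! ### Cycles with one chord, numbered from an end of the chord -/

/-- The vertices `g 0, …, g (n - 1)` are distinct and form, in this order, a cycle whose only chord
joins `g 0` and `g m`. The values of `g` from `n` on are irrelevant. -/
structure NumberedOneChord (G : SimpleGraph V) (n m : ℕ) (g : ℕ → V) : Prop where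
  two_le : 2 ≤ m
  add_two_le : m + 2 ≤ n
  inj : ∀ k l, k < l → l < n → g k ≠ g l
  adj : ∀ k l, k < l → l < n →
    (G.Adj (g k) (g l) ↔ l = k + 1 ∨ (k = 0 ∧ l = n - 1) ∨ (k = 0 ∧ l = m))

lemma ZMod.eq_add_one_iff_val {n : ℕ} (hn : 2 ≤ n) (x y : ZMod n) :
    y = x + 1 ↔ y.val = x.val + 1 ∨ (x.val = n - 1 ∧ y.val = 0) := by
  have : NeZero n := ⟨by omega⟩
  have : Fact (1 < n) := ⟨by omega⟩
  have hx := x.val_lt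
  have hy := y.val_lt
  rw [← (ZMod.val_injective n).eq_iff, ZMod.val_add, ZMod.val_one]
  by_cases h : x.val + 1 < n
  · rw [Nat.mod_eq_of_lt h]; omega
  · have : x.val + 1 = n := by omega
    rw [this, Nat.mod_self]; omega

lemma NumberedOneChord.isOneChordSet {n m : ℕ} {g : ℕ → V} (h : NumberedOneChord G n m g) :
    IsOneChordSet G (Set.range fun x : ZMod n => g x.val) := by
  have h2 := h.two_le
  have h3 := h.add_two_le
  have : NeZero n := ⟨by omega⟩
  have hm : ((m : ℕ) : ZMod n).val = m := ZMod.val_cast_of_lt (by omega)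
  refine ⟨n, by omega, fun x => g x.val, ?_, rfl, 0, (m : ZMod n), ?_, ?_, ?_, ?_⟩
  · intro x y hxy
    apply ZMod.val_injective n
    rcases lt_trichotomy x.val y.val with hl | hl | hl
    · exact absurd hxy (h.inj _ _ hl y.val_lt)
    · exact hl
    · exact absurd hxy.symm (h.inj _ _ hl x.val_lt)
  · rw [Ne, ← (ZMod.val_injective n).eq_iff, hm, ZMod.val_zero]; omega
  · rw [Ne, ZMod.eq_add_one_iff_val (by omega), hm, ZMod.val_zero]; omega
  · rw [Ne, ZMod.eq_add_one_iff_val (by omega), hm, ZMod.val_zero]; omega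
  · intro x y
    have hx := x.val_lt
    have hy := y.val_lt
    rw [ZMod.eq_add_one_iff_val (by omega), ZMod.eq_add_one_iff_val (by omega)]
    simp only [← (ZMod.val_injective n).eq_iff, hm, ZMod.val_zero]
    rcases lt_trichotomy x.val y.val with hl | hl | hl
    · rw [h.adj _ _ hl hy]; omega
    · simp only [hl, SimpleGraph.irrefl, false_iff]; omega
    · rw [SimpleGraph.adj_comm, h.adj _ _ hl hx]; omega

lemma IsOneChordSet.exists_numbered {W : Set V} (h : IsOneChordSet G W) :
    ∃ n m g, NumberedOneChord G n m g := by
  obtain ⟨n, hn, f, hf, -, i, j, hji, hji', hij', hadj⟩ := h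
  have : NeZero n := ⟨by omega⟩
  have hval : ∀ k < n, ((k : ℕ) : ZMod n).val = k := fun k hk => ZMod.val_cast_of_lt hk
  have hm := (j - i).val_lt
  have e1 : j - i ≠ 0 := sub_ne_zero.2 hji
  have e2 : j - i ≠ 0 + 1 := fun e => hji' (by rw [← sub_add_cancel j i, e]; ring)
  have e3 : (0 : ZMod n) ≠ (j - i) + 1 := fun e => hij' (by
    rw [← sub_eq_zero, ← neg_eq_zero, ← e.symm]; ring)
  rw [Ne, ← (ZMod.val_injective n).eq_iff, ZMod.val_zero] at e1
  rw [Ne, ZMod.eq_add_one_iff_val (by omega), ZMod.val_zero] at e2 e3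
  refine ⟨n, (j - i).val, fun k => f (i + k), by omega, by omega, ?_, ?_⟩
  · intro k l hkl hl he
    have := congrArg ZMod.val (add_left_cancel (hf he))
    rw [hval k (by omega), hval l hl] at this
    omega
  · intro k l hkl hl
    have t1 : ∀ x y : ZMod n, i + x = i + y + 1 ↔ x = y + 1 := fun x y => by
      rw [add_assoc, add_right_inj]
    have t2 : ∀ x : ZMod n, i + x = j ↔ x = j - i := fun x => by
      rw [eq_sub_iff_add_eq, add_comm]
    have t3 : ∀ x : ZMod n, i + x = i ↔ x = 0 := fun x => by simp
    rw [hadj, t1, t1, t2, t2, t3, t3, ZMod.eq_add_one_iff_val (by omega),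
      ZMod.eq_add_one_iff_val (by omega)]
    simp only [← (ZMod.val_injective n).eq_iff, hval k (by omega), hval l hl, ZMod.val_zero]
    omega

/-! ### From a chord to a separator -/

/-- The minimal separator found here is not stable because it contains both ends of the chord. -/
lemma NumberedOneChord.exists_not_stable [Finite V] {n m : ℕ} {g : ℕ → V}
    (h : NumberedOneChord G n m g) :
    ∃ a b : V, a ≠ b ∧ ∃ S, IsMinABSeparator G a b S ∧ ¬ IsStableSet G S := by
  have h2 := h.two_le
  have h3 := h.add_two_le
  have hinj : ∀ k l, k < n → l < n → g k = g l → k = l := by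
    intro k l hk hl e
    rcases lt_trichotomy k l with hlt | hlt | hlt
    · exact absurd e (h.inj _ _ hlt hl)
    · exact hlt
    · exact absurd e.symm (h.inj _ _ hlt hk)
  -- The complement of the union of the two open arcs.
  let T : Set V := {x | ∀ k, 0 < k → k < n → k ≠ m → x ≠ g k}
  have hT : ∀ k, 0 < k → k < n → k ≠ m → g k ∉ T := fun k h1 h2 h3 hk => hk k h1 h2 h3 rfl
  have hsep : IsABSeparator G (g 1) (g (n - 1)) T := by
    refine ⟨hT _ (by omega) (by omega) (by omega), hT _ (by omega) (by omega) (by omega), ?_⟩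
    intro hr
    have := hr.mem_of_closed (C := {x | ∃ k, 0 < k ∧ k < m ∧ x = g k})
      ⟨1, by omega, by omega, rfl⟩ (by
        rintro x ⟨k, hk0, hkm, rfl⟩ y hy hadj
        obtain ⟨l, hl0, hln, hlm, rfl⟩ : ∃ l, 0 < l ∧ l < n ∧ l ≠ m ∧ y = g l := by
          by_contra! hc
          exact hy hc
        refine ⟨l, hl0, ?_, rfl⟩
        by_contra! hml
        rw [h.adj k l (by omega) hln] at hadj
        omega)
    obtain ⟨k, hk0, hkm, hk⟩ := this
    have := hinj _ _ (by omega) (by omega) hk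
    omega
  obtain ⟨S, hST, hS⟩ := exists_minABSeparator_subset hsep
  have hgS : ∀ k, 0 < k → k < n → k ≠ m → g k ∉ S := fun k h1 h2 h3 hk => hT k h1 h2 h3 (hST hk)
  refine ⟨g 1, g (n - 1), h.inj _ _ (by omega) (by omega), S, hS, fun hst => ?_⟩
  refine hst (g 0) ?_ (g m) ?_ ((h.adj 0 m (by omega) (by omega)).2 (by omega))
  · by_contra h0
    refine hS.1.2.2 (((ReachAvoid.refl hS.1.1).step ?_ h0).step ?_ hS.1.2.1)
    · exact ((h.adj 0 1 (by omega) (by omega)).2 (by omega)).symm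
    · exact (h.adj 0 (n - 1) (by omega) (by omega)).2 (by omega)
  · by_contra hm
    have key : ∀ k, k + 1 < n → ReachAvoid G S (g 1) (g (k + 1)) := by
      intro k
      induction k with
      | zero => exact fun _ => .refl hS.1.1
      | succ k ih =>
        intro hk
        refine (ih (by omega)).step ((h.adj _ _ (by omega) (by omega)).2 (.inl rfl)) ?_
        by_cases hkm : k + 1 + 1 = m
        · rwa [hkm]
        · exact hgS _ (by omega) hk hkm
    have := key (n - 2) (by omega)
    rw [show n - 2 + 1 = n - 1 by omega] at this
    exact hS.1.2.2 this

/-! ### From a separator to a chord -/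

/-- The vertices `h 0, …, h p` form a path of length at least two from `u` to `v` with interior in
`A`, inducing no edges of `G` besides those of the path and `uv`. -/
structure IsArc (G : SimpleGraph V) (A : Set V) (u v : V) (p : ℕ) (h : ℕ → V) : Prop where
  two_le : 2 ≤ p
  zero : h 0 = u
  last : h p = v
  mem : ∀ k, 0 < k → k < p → h k ∈ A
  inj : ∀ k l, k < l → l ≤ p → h k ≠ h l
  adj : ∀ k l, k < l → l ≤ p → (G.Adj (h k) (h l) ↔ l = k + 1 ∨ (k = 0 ∧ l = p))

/-- The subgraph of `G` induced on `A ∪ {u, v}`, without the edge `uv`, on the vertex type `V`. -/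
def arcGraph (G : SimpleGraph V) (A : Set V) (u v : V) : SimpleGraph V where
  Adj x y := G.Adj x y ∧ (x ∈ A ∨ x = u ∨ x = v) ∧ (y ∈ A ∨ y = u ∨ y = v) ∧
    ¬ (x = u ∧ y = v) ∧ ¬ (x = v ∧ y = u)
  symm := ⟨fun _ _ h => ⟨h.1.symm, h.2.2.1, h.2.1, fun e => h.2.2.2.2 ⟨e.2, e.1⟩,
    fun e => h.2.2.2.1 ⟨e.2, e.1⟩⟩⟩
  loopless := ⟨fun _ h => G.irrefl h.1⟩

/-- The arc is a shortest path from `u` to `v` in `arcGraph`; all its properties follow from the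
fact that its `k`-th vertex is at distance `k` from `u` there. -/
lemma exists_arc_of_reachable {A : Set V} {u v : V} (huv : G.Adj u v)
    (hr : (arcGraph G A u v).Reachable u v) : ∃ p h, IsArc G A u v p h := by
  obtain ⟨w, hw⟩ := hr.exists_walk_length_eq_dist
  have hdist : ∀ k ≤ w.length, (arcGraph G A u v).dist u (w.getVert k) = k := by
    intro k hk
    have h1 := SimpleGraph.dist_le (w.take k)
    have h2 := SimpleGraph.dist_le (w.drop k)
    have h3 := (w.take k).reachable.dist_triangle_left v
    rw [SimpleGraph.Walk.take_length] at h1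
    rw [SimpleGraph.Walk.drop_length] at h2
    omega
  have hinj : ∀ k l, k < l → l ≤ w.length → w.getVert k ≠ w.getVert l := by
    intro k l hkl hl e
    have h1 := hdist k (by omega)
    have h2 := hdist l hl
    rw [e] at h1
    omega
  have hsucc : ∀ k < w.length, (arcGraph G A u v).Adj (w.getVert k) (w.getVert (k + 1)) :=
    fun k hk => w.adj_getVert_succ hk
  have hpos : w.length ≠ 0 := fun h0 => huv.ne (SimpleGraph.Walk.eq_of_length_eq_zero h0)
  have hone : w.length ≠ 1 := fun h1 =>
    (SimpleGraph.Walk.adj_of_length_eq_one h1).2.2.2.1 ⟨rfl, rfl⟩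
  have h0 : w.getVert 0 = u := w.getVert_zero
  have hp : w.getVert w.length = v := w.getVert_length
  have hmem : ∀ k, 0 < k → k < w.length → w.getVert k ∈ A := by
    intro k hk hkp
    rcases (hsucc k hkp).2.1 with h | h | h
    · exact h
    · exact absurd (h0.trans h.symm) (hinj 0 k hk hkp.le)
    · exact absurd (h.trans hp.symm) (hinj k _ hkp le_rfl)
  have hmem' : ∀ k ≤ w.length, w.getVert k ∈ A ∨ w.getVert k = u ∨ w.getVert k = v := by
    intro k hk
    rcases Nat.eq_zero_or_pos k with rfl | hk0
    · exact .inr (.inl h0)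
    · rcases hk.lt_or_eq with hk | rfl
      · exact .inl (hmem k hk0 hk)
      · exact .inr (.inr hp)
  have hu : ∀ k ≤ w.length, w.getVert k = u → k = 0 := by
    intro k hk e
    by_contra hne
    exact hinj 0 k (by omega) hk (h0.trans e.symm)
  have hv : ∀ k ≤ w.length, w.getVert k = v → k = w.length := by
    intro k hk e
    by_contra hne
    exact hinj k _ (by omega) le_rfl (e.trans hp.symm)
  refine ⟨w.length, w.getVert, by omega, h0, hp, hmem, hinj, fun k l hkl hl => ⟨fun hadj => ?_, ?_⟩⟩
  · by_contra! hcon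
    have hH : (arcGraph G A u v).Adj (w.getVert k) (w.getVert l) := by
      refine ⟨hadj, hmem' k (by omega), hmem' l hl, fun e => ?_, fun e => ?_⟩
      · exact hcon.2 (hu k (by omega) e.1) (hv l hl e.2)
      · have := hu l hl e.2
        omega
    have h1 := hdist k (by omega)
    have h2 := hdist l hl
    have h3 : (arcGraph G A u v).dist u (w.getVert l) ≤ k + 1 := by
      have := SimpleGraph.dist_le ((w.take k).concat hH)
      simp only [SimpleGraph.Walk.length_concat, SimpleGraph.Walk.take_length] at this
      omega
    omega
  · rintro (rfl | ⟨rfl, rfl⟩)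
    · exact (hsucc k (by omega)).1
    · rwa [h0, hp]

lemma exists_arc {a b u v : V} {S : Set V} (hS : IsMinABSeparator G a b S) (hu : u ∈ S)
    (hv : v ∈ S) (huv : G.Adj u v) : ∃ p h, IsArc G {x | ReachAvoid G S a x} u v p h := by
  apply exists_arc_of_reachable huv
  set H := arcGraph G {x | ReachAvoid G S a x} u v with hH
  have hA : ∀ x, ReachAvoid G S a x → H.Reachable a x := by
    intro x hx
    refine (hx.mem_of_closed (C := {x | ReachAvoid G S a x ∧ H.Reachable a x})
      ⟨.refl hS.1.1, .refl a⟩ ?_).2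
    rintro x ⟨hx, hxr⟩ y hy hxy
    refine ⟨hx.step hxy hy, hxr.trans (SimpleGraph.Adj.reachable ?_)⟩
    refine ⟨hxy, .inl hx, .inl (hx.step hxy hy), fun e => ?_, fun e => ?_⟩
    · exact hx.right_notMem (e.1 ▸ hu)
    · exact hx.right_notMem (e.1 ▸ hv)
  obtain ⟨x, hx, hux⟩ := hS.exists_adj hu
  obtain ⟨y, hy, hvy⟩ := hS.exists_adj hv
  have h1 : H.Adj u x := ⟨hux, .inr (.inl rfl), .inl hx, fun e => hx.right_notMem (e.2 ▸ hv),
    fun e => huv.ne e.1⟩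
  have h2 : H.Adj v y := ⟨hvy, .inr (.inr rfl), .inl hy, fun e => huv.ne e.1.symm,
    fun e => hy.right_notMem (e.2 ▸ hu)⟩
  exact (h1.reachable.trans (hA x hx).symm).trans ((hA y hy).trans h2.symm.reachable)

/-- Two arcs with the same adjacent ends, through disjoint sets with no edges between them, form a
cycle with one chord. -/
lemma IsArc.numberedOneChord {A B : Set V} {u v : V} {p q : ℕ} {h h' : ℕ → V}
    (hA : IsArc G A u v p h) (hB : IsArc G B u v q h')
    (hdisj : ∀ x ∈ A, ∀ y ∈ B, x ≠ y ∧ ¬ G.Adj x y) :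
    NumberedOneChord G (p + q) p fun k => if k ≤ p then h k else h' (p + q - k) := by
  have hp := hA.two_le
  have hq := hB.two_le
  refine ⟨hp, by omega, fun k l hkl hl => ?_, fun k l hkl hl => ?_⟩
  · split_ifs with h1 h2 h2
    · exact hA.inj _ _ hkl h2
    · rcases Nat.eq_zero_or_pos k with rfl | hk0
      · rw [hA.zero, ← hB.zero]
        exact hB.inj _ _ (by omega) (by omega)
      · rcases h1.lt_or_eq with hk | rfl
        · exact (hdisj _ (hA.mem k hk0 hk) _ (hB.mem _ (by omega) (by omega))).1
        · rw [hA.last, ← hB.last]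
          exact (hB.inj _ _ (by omega) (by omega)).symm
    · omega
    · exact (hB.inj _ _ (by omega) (by omega)).symm
  · split_ifs with h1 h2 h2
    · rw [hA.adj _ _ hkl h2]; omega
    · rcases Nat.eq_zero_or_pos k with rfl | hk0
      · rw [hA.zero, ← hB.zero, hB.adj _ _ (by omega) (by omega)]; omega
      · rcases h1.lt_or_eq with hk | rfl
        · have := (hdisj _ (hA.mem k hk0 hk) _ (hB.mem (p + q - l) (by omega) (by omega))).2
          simp only [this, false_iff]; omega
        · rw [hA.last, ← hB.last, SimpleGraph.adj_comm, hB.adj _ _ (by omega) (by omega)]; omega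
    · omega
    · rw [SimpleGraph.adj_comm, hB.adj _ _ (by omega) (by omega)]; omega

end

/-- `G` is 1-chord free iff every minimal `(a,b)` vertex
separator of `G` is a stable set. -/
theorem stmt_3 {V : Type*} [Fintype V] (G : SimpleGraph V) :
    OneChordFree G ↔
      ∀ a b : V, a ≠ b → ∀ S : Set V, IsMinABSeparator G a b S → IsStableSet G S := by
  constructor
  · intro hfree a b _ S hS u hu v hv huv
    obtain ⟨p, h, hA⟩ := exists_arc hS hu hv huv
    obtain ⟨q, h', hB⟩ := exists_arc hS.symm hu hv huv
    refine hfree _ (hA.numberedOneChord hB fun x hx y hy => ⟨?_, fun hxy => ?_⟩).isOneChordSet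
    · rintro rfl
      exact hS.1.2.2 (ReachAvoid.trans hx (ReachAvoid.symm hy))
    · exact hS.1.2.2 ((ReachAvoid.step hx hxy (ReachAvoid.right_notMem hy)).trans
        (ReachAvoid.symm hy))
  · intro hst W hW
    obtain ⟨n, m, g, hg⟩ := hW.exists_numbered
    obtain ⟨a, b, hab, S, hS, hns⟩ := hg.exists_not_stable
    exact hns (hst a b hab S hS)
end

section
/- Let G be a simple graph that is not triangle free, is not complete, and has vertex connectivity at least 2. Then G contains an induced subgraph that is a cycle of length at least 4 with exactly one chord (i.e., G is not 1-chord free). -/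
/-- `p 0, p 1, …, p n` is a walk of length `n ≥ 2` between two distinct vertices of `K` whose
interior vertices all lie outside `K`. Values of `p` beyond `n` are irrelevant. -/
def IsEar {V : Type*} (G : SimpleGraph V) (K : Set V) (n : ℕ) (p : ℕ → V) : Prop :=
  2 ≤ n ∧ p 0 ∈ K ∧ p n ∈ K ∧ p 0 ≠ p n ∧ (∀ i, 0 < i → i < n → p i ∉ K) ∧
    ∀ i, i < n → G.Adj (p i) (p (i + 1))

/-- Following a walk of `G \ S` from outside `K` up to its first vertex in `K`. -/
lemma exists_first_hit {V : Type*} (G : SimpleGraph V) (K S : Set V)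
    {x y : (Sᶜ : Set V)} (w : (G.induce Sᶜ).Walk x y) (hx : (x : V) ∉ K) (hy : (y : V) ∈ K) :
    ∃ (m : ℕ) (q : ℕ → V), 1 ≤ m ∧ q 0 = x ∧ q m ∈ K ∧ q m ∉ S ∧ (∀ i, i < m → q i ∉ K) ∧
      ∀ i, i < m → G.Adj (q i) (q (i + 1)) := by
  induction w with
  | nil => exact absurd hy hx
  | @cons u v y h w ih =>
    by_cases hv : (v : V) ∈ K
    · refine ⟨1, fun i => if i = 0 then u else v, le_rfl, by simp, by simpa using hv,
        by simp only [one_ne_zero, if_false]; exact v.2, ?_, ?_⟩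
      · intro i hi
        simpa [show i = 0 by omega] using hx
      · intro i hi
        simpa [show i = 0 by omega] using h
    · obtain ⟨m, q, hm, h0, hK, hS, hint, hadj⟩ := ih hv hy
      refine ⟨m + 1, fun i => Nat.casesOn i u q, by omega, rfl, hK, hS, ?_, ?_⟩
      · rintro (_ | i) hi
        · exact hx
        · exact hint i (by omega)
      · rintro (_ | i) hi
        · change G.Adj u (q 0)
          rw [h0]
          exact h
        · exact hadj i (by omega)

lemma exists_ear {V : Type*} (G : SimpleGraph V) (K : Set V)
    (hconn : ∀ S : Set V, S.ncard ≤ 1 → (G.induce Sᶜ).Connected)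
    (hK : ∃ u ∈ K, ∃ v ∈ K, u ≠ v) (hout : ∃ v, v ∉ K) :
    ∃ n p, IsEar G K n p := by
  obtain ⟨u, hu, v, hv, huv⟩ := hK
  obtain ⟨z, hz⟩ := hout
  have hedge : ∃ x a, x ∉ K ∧ a ∈ K ∧ G.Adj x a := by
    obtain ⟨w⟩ := (hconn ∅ (by simp)).preconnected ⟨z, by simp⟩ ⟨u, by simp⟩
    obtain ⟨m, q, hm, -, hqK, -, hint, hadj⟩ := exists_first_hit G K ∅ w hz hu
    refine ⟨q (m - 1), q m, hint _ (by omega), hqK, ?_⟩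
    have := hadj (m - 1) (by omega)
    rwa [Nat.sub_add_cancel hm] at this
  obtain ⟨x, a, hx, ha, hxa⟩ := hedge
  obtain ⟨c, hc, hca⟩ : ∃ c ∈ K, c ≠ a := by
    by_cases h : u = a
    · exact ⟨v, hv, fun h' => huv (h.trans h'.symm)⟩
    · exact ⟨u, hu, h⟩
  have hxa' : x ≠ a := hxa.ne
  obtain ⟨w⟩ := (hconn {a} (by simp)).preconnected ⟨x, by simpa using hxa'⟩ ⟨c, by simpa using hca⟩
  obtain ⟨m, q, hm, h0, hqK, hqS, hint, hadj⟩ := exists_first_hit G K {a} w hx hc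
  refine ⟨m + 1, fun i => Nat.casesOn i a q, by omega, ha, hqK, ?_, ?_, ?_⟩
  · exact fun h => hqS h.symm
  · rintro (_ | i) hi hi'
    · omega
    · exact hint i (by omega)
  · rintro (_ | i) hi
    · change G.Adj a (q 0)
      rw [h0]
      exact hxa.symm
    · exact hadj i (by omega)

/-- Cutting out `p (i + 1), …, p (i + d)` from an ear leaves an ear, provided the two ends of the
cut are adjacent and an interior vertex remains. -/
lemma IsEar.shortcut {V : Type*} {G : SimpleGraph V} {K : Set V} {n : ℕ} {p : ℕ → V}
    (h : IsEar G K n p) {i d : ℕ} (hid : i + d + 1 ≤ n) (hd : d + 2 ≤ n)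
    (hadj : G.Adj (p i) (p (i + d + 1))) :
    IsEar G K (n - d) (fun t => if t ≤ i then p t else p (t + d)) := by
  obtain ⟨hn, h0, hn', hne, hint, hstep⟩ := h
  have hend : (if n - d ≤ i then p (n - d) else p (n - d + d)) = p n := by
    rw [if_neg (by omega), Nat.sub_add_cancel (by omega)]
  refine ⟨by omega, by simpa using h0, ?_, ?_, ?_, ?_⟩
  · simpa only [hend] using hn'
  · simpa only [hend, Nat.zero_le, if_true] using hne
  · intro t ht ht'
    dsimp only
    split_ifs
    · exact hint t ht (by omega)
    · exact hint _ (by omega) (by omega)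
  · intro t ht
    dsimp only
    rcases lt_trichotomy t i with hlt | rfl | hgt
    · rw [if_pos (by omega), if_pos (by omega)]
      exact hstep t (by omega)
    · rw [if_pos le_rfl, if_neg (by omega), show t + 1 + d = t + d + 1 by omega]
      exact hadj
    · rw [if_neg (by omega), if_neg (by omega), show t + 1 + d = t + d + 1 by omega]
      exact hstep _ (by omega)

section Minimal

variable {V : Type*} {G : SimpleGraph V} {K : Set V} {n : ℕ} {p : ℕ → V}

lemma ear_chord (h : IsEar G K n p) (hmin : ∀ m < n, ∀ q, ¬ IsEar G K m q) {i j : ℕ}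
    (hij : i < j) (hj : j ≤ n) (hadj : G.Adj (p i) (p j)) : j = i + 1 ∨ (i = 0 ∧ j = n) := by
  by_contra hcon
  obtain ⟨d, rfl⟩ : ∃ d, j = i + d + 1 := ⟨j - i - 1, by omega⟩
  exact hmin (n - d) (by omega) _ (h.shortcut (i := i) (d := d) hj (by omega) hadj)

lemma ear_injective (h : IsEar G K n p) (hmin : ∀ m < n, ∀ q, ¬ IsEar G K m q) {i j : ℕ}
    (hij : i < j) (hj : j ≤ n) : p i ≠ p j := by
  intro heq
  have hn := h.1
  have hjn : j ≠ n := by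
    rintro rfl
    rcases Nat.eq_zero_or_pos i with rfl | hi
    · exact h.2.2.2.1 heq
    · exact h.2.2.2.2.1 i hi hij (heq ▸ h.2.2.1)
  have hi0 : i ≠ 0 := by
    rintro rfl
    exact h.2.2.2.2.1 j hij (by omega) (heq ▸ h.2.1)
  -- A repeated interior vertex `p i = p j` makes `p i` adjacent to `p (j + 1)`.
  have hadj := h.2.2.2.2.2 j (by omega)
  rw [← heq] at hadj
  have := ear_chord h hmin (i := i) (j := j + 1) (by omega) (by omega) hadj
  omega

/-- For a shortest ear of a maximal clique with at least three vertices, some clique vertex other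
than the ends of the ear has no neighbour in its interior. -/
lemma ear_apex (h : IsEar G K n p) (hmin : ∀ m < n, ∀ q, ¬ IsEar G K m q)
    (hmax : ∀ x, x ∉ K → ∃ c ∈ K, ¬ G.Adj c x) (hthree : ∀ a b, ∃ c ∈ K, c ≠ a ∧ c ≠ b) :
    ∃ c ∈ K, c ≠ p 0 ∧ c ≠ p n ∧ ∀ i, 0 < i → i < n → ¬ G.Adj c (p i) := by
  obtain ⟨hn, h0, hn', hne, hint, hstep⟩ := h
  rcases hn.eq_or_lt with rfl | hn3
  · obtain ⟨c, hc, hcx⟩ := hmax (p 1) (hint 1 (by omega) (by omega))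
    refine ⟨c, hc, ?_, ?_, ?_⟩
    · rintro rfl
      exact hcx (hstep 0 (by omega))
    · rintro rfl
      exact hcx (hstep 1 (by omega)).symm
    · intro i hi hi'
      rwa [show i = 1 by omega]
  · obtain ⟨c, hc, hc0, hcn⟩ := hthree (p 0) (p n)
    refine ⟨c, hc, hc0, hcn, fun i hi hi' hadj => ?_⟩
    -- If `i = n - 1`, the ear `c, p (n - 1), p n` has length `2 < n`; otherwise the ear
    -- `p 0, …, p i, c` has length `i + 1 < n`.
    by_cases hlast : i + 1 = n
    · refine hmin 2 hn3 (fun t => if t = 0 then c else p (i + t - 1))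
        ⟨le_rfl, by simpa using hc, ?_, ?_, ?_, ?_⟩
      · simpa [hlast] using hn'
      · simpa [hlast] using hcn
      · intro t ht ht'
        obtain rfl : t = 1 := by omega
        simpa using hint i hi hi'
      · intro t ht
        obtain rfl | rfl : t = 0 ∨ t = 1 := by omega
        · simpa using hadj
        · simpa using hstep i hi'
    · refine hmin (i + 1) (by omega) (fun t => if t ≤ i then p t else c)
        ⟨by omega, by simpa using h0, by simpa using hc, by simpa using hc0.symm, ?_, ?_⟩
      · intro t ht ht'
        simpa [show t ≤ i by omega] using hint t ht (by omega)
      · intro t ht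
        rcases (show t ≤ i by omega).eq_or_lt with rfl | hlt
        · simpa using hadj.symm
        · simpa [show t ≤ i by omega, show t + 1 ≤ i by omega] using hstep t (by omega)

end Minimal

lemma zmod_eq_add_one_iff {n : ℕ} (x y : ZMod (n + 2)) :
    y = x + 1 ↔ y.val = x.val + 1 ∨ (y.val = 0 ∧ x.val = n + 1) := by
  have hx := x.val_lt
  have hy := y.val_lt
  rw [← (ZMod.val_injective (n + 2)).eq_iff, ZMod.val_add, ZMod.val_one'' (by omega)]
  rcases (show x.val + 1 ≤ n + 2 by omega).eq_or_lt with h | h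
  · rw [h, Nat.mod_self]; omega
  · rw [Nat.mod_eq_of_lt h]; omega

/-- A description of a 1-chord subgraph with vertices indexed by `0, …, n + 1` and chord joining
`0` and `n`. -/
lemma isOneChordSet_of_nat {V : Type*} {G : SimpleGraph V} {n : ℕ} (hn : 2 ≤ n) (g : ℕ → V)
    (hinj : ∀ i j, i < j → j < n + 2 → g i ≠ g j)
    (hadj : ∀ i j, i < j → j < n + 2 →
      (G.Adj (g i) (g j) ↔ j = i + 1 ∨ (i = 0 ∧ j = n + 1) ∨ (i = 0 ∧ j = n))) :
    ∃ W, IsOneChordSet G W := by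
  have hval : ((n : ℕ) : ZMod (n + 2)).val = n := ZMod.val_cast_of_lt (by omega)
  refine ⟨_, n + 2, by omega, fun x => g x.val, ?_, rfl, 0, (n : ZMod (n + 2)), ?_, ?_, ?_, ?_⟩
  · intro x y hxy
    apply ZMod.val_injective
    have hx := x.val_lt
    have hy := y.val_lt
    rcases lt_trichotomy x.val y.val with h | h | h
    · exact absurd hxy (hinj _ _ h hy)
    · exact h
    · exact absurd hxy.symm (hinj _ _ h hx)
  · rw [Ne, ← (ZMod.val_injective (n + 2)).eq_iff, hval, ZMod.val_zero]
    omega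
  · rw [Ne, zmod_eq_add_one_iff, hval, ZMod.val_zero]
    omega
  · rw [Ne, zmod_eq_add_one_iff, hval, ZMod.val_zero]
    omega
  · intro x y
    have hx := x.val_lt
    have hy := y.val_lt
    rw [zmod_eq_add_one_iff, zmod_eq_add_one_iff]
    simp only [← (ZMod.val_injective (n + 2)).eq_iff, hval, ZMod.val_zero]
    rcases lt_trichotomy x.val y.val with h | h | h
    · rw [hadj _ _ h hy]
      omega
    · rw [h]
      simp only [SimpleGraph.irrefl, false_iff]
      omega
    · rw [G.adj_comm, hadj _ _ h hx]
      omega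

/-- A non-complete graph of vertex connectivity at least 2
that is not triangle free contains an induced cycle of length at least 4 with
exactly one chord, i.e. it is not 1-chord free. -/
theorem stmt_14 {V : Type*} [Fintype V] (G : SimpleGraph V)
    (htri : ∃ u v w : V, G.Adj u v ∧ G.Adj v w ∧ G.Adj u w)
    (hnc : ∃ u v : V, u ≠ v ∧ ¬ G.Adj u v)
    (hconn : ∀ S : Set V, S.ncard ≤ 1 → (G.induce Sᶜ).Connected ∧ 2 ≤ Sᶜ.ncard) :
    ¬ OneChordFree G := by
  classical
  intro hfree
  suffices h : ∃ W, IsOneChordSet G W from h.elim hfree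
  obtain ⟨u, v, w, huv, hvw, huw⟩ := htri
  obtain ⟨K, hTK, hK⟩ := Finite.exists_le_maximal (p := fun s : Set V => G.IsClique s)
    (a := {u, v, w}) (by simp [SimpleGraph.isClique_insert, huv, hvw, huw])
  have hclique : G.IsClique K := hK.prop
  have hu : u ∈ K := hTK (by simp)
  have hv : v ∈ K := hTK (by simp)
  have hw : w ∈ K := hTK (by simp)
  have hmax : ∀ x, x ∉ K → ∃ c ∈ K, ¬ G.Adj c x := by
    intro x hx
    by_contra! hcon
    refine hx (hK.le_of_ge (y := insert x K) ?_ (Set.subset_insert x K) (Set.mem_insert x K))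
    exact hclique.insert fun b hb _ => (hcon b hb).symm
  have hthree : ∀ a b, ∃ c ∈ K, c ≠ a ∧ c ≠ b := by
    intro a b
    have h1 := huv.ne
    have h2 := hvw.ne
    have h3 := huw.ne
    by_contra! hcon
    have hu' := hcon u hu
    have hv' := hcon v hv
    have hw' := hcon w hw
    by_cases hua : u = a
    · exact h2 ((hv' fun h => h1 (hua.trans h.symm)).trans
        (hw' fun h => h3 (hua.trans h.symm)).symm)
    · by_cases hva : v = a
      · exact h3 ((hu' hua).trans (hw' fun h => h2 (hva.trans h.symm)).symm)
      · exact h1 ((hu' hua).trans (hv' hva).symm)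
  have hout : ∃ z, z ∉ K := by
    obtain ⟨s, t, hst, hnadj⟩ := hnc
    by_contra! hall
    exact hnadj (hclique (hall s) (hall t) hst)
  have hex := exists_ear G K (fun S hS => (hconn S hS).1) ⟨u, hu, v, hv, huv.ne⟩ hout
  obtain ⟨p, hp⟩ := Nat.find_spec hex
  have hmin : ∀ m < Nat.find hex, ∀ q, ¬ IsEar G K m q :=
    fun m hm q hq => Nat.find_min hex hm ⟨q, hq⟩
  generalize Nat.find hex = n at hp hmin
  obtain ⟨c, hc, hc0, hcn, hcint⟩ := ear_apex hp hmin hmax hthree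
  have hcne : ∀ i, i ≤ n → c ≠ p i := by
    rintro i hi rfl
    refine hp.2.2.2.2.1 i (Nat.pos_of_ne_zero ?_) (lt_of_le_of_ne hi ?_) hc
    · rintro rfl
      exact hc0 rfl
    · rintro rfl
      exact hcn rfl
  refine isOneChordSet_of_nat hp.1 (fun t => if t ≤ n then p t else c) ?_ ?_
  · intro i j hij hj
    rw [if_pos (show i ≤ n by omega)]
    split_ifs with h
    · exact ear_injective hp hmin hij h
    · exact (hcne i (by omega)).symm
  · intro i j hij hj
    rw [if_pos (show i ≤ n by omega)]
    split_ifs with h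
    · constructor
      · intro hadj
        have := ear_chord hp hmin hij h hadj
        omega
      · rintro (rfl | ⟨rfl, rfl⟩ | ⟨rfl, rfl⟩)
        · exact hp.2.2.2.2.2 i (by omega)
        · omega
        · exact hclique hp.2.1 hp.2.2.1 hp.2.2.2.1
    · obtain rfl : j = n + 1 := by omega
      constructor
      · intro hadj
        by_contra hcon
        exact hcint i (by omega) (by omega) hadj.symm
      · intro hor
        obtain rfl | rfl : i = n ∨ i = 0 := by omega
        · exact hclique hp.2.2.1 hc hcn.symm
        · exact hclique hp.2.1 hc hc0.symm
end
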